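/- Let V be a vertex operator algebra, W a weak V-module, and U a linear subspace of W. Viewing (W/U)* as a subspace of W* in the natural way, one has (W/U)* ⊆ D(W) if and only if for every v ∈ V there exists k ∈ ℤ such that v_m W ⊆ U for all m ≤ k. -/

import Mathlib

noncomputable section

/-- The generalized binomial coefficient `C(m, i)` for `m ∈ ℤ`, `i ∈ ℕ`,
as a complex number: `m(m-1)⋯(m-i+1)/i!`. -/
def cchoose (m : ℤ) (i : ℕ) : ℂ :=
  (∏ j ∈ Finset.range i, ((m : ℂ) - (j : ℂ))) / (Nat.factorial i : ℂ)

/-- A vertex operator algebra `V = ⊕ₙ V₍ₙ₎` over `ℂ`.  The vertex operator map is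
recorded through its modes `op u n v = uₙ v` (so `Y(u,x)v = Σₙ uₙv x^{-n-1}`), with
vacuum `one`, conformal vector `omega` (with `L(k) = ω_{k+1}`), central charge `cc`,
weight grading `wtSpace` with projections `proj`.  The Jacobi identity is recorded in
the equivalent form of the Borcherds identity on modes. -/
structure VOA where
  carrier : Type
  [grp : AddCommGroup carrier]
  [mdl : Module ℂ carrier]
  op : carrier → ℤ → carrier → carrier
  one : carrier
  omega : carrier
  wtSpace : ℤ → Submodule ℂ carrier
  proj : ℤ → carrier → carrier
  cc : ℂ
  op_linear_left : ∀ (n : ℤ) (w : carrier), IsLinearMap ℂ fun u => op u n w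
  op_linear_right : ∀ (u : carrier) (n : ℤ), IsLinearMap ℂ (op u n)
  trunc : ∀ u v : carrier, ∃ N : ℤ, ∀ n : ℤ, N ≤ n → op u n v = 0
  one_op : ∀ (n : ℤ) (v : carrier), op one n v = if n = -1 then v else 0
  create_nonneg : ∀ (v : carrier) (n : ℤ), 0 ≤ n → op v n one = 0
  create : ∀ v : carrier, op v (-1) one = v
  borcherds : ∀ (u v w : carrier) (l m n : ℤ),
    (∑ᶠ i : ℕ, cchoose m i • op (op u (l + (i : ℤ)) v) (m + n - (i : ℤ)) w)
      = ∑ᶠ i : ℕ, ((-1 : ℂ) ^ i * cchoose l i) •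
          (op u (l + m - (i : ℤ)) (op v (n + (i : ℤ)) w)
            - ((-1 : ℂ) ^ l) • op v (l + n - (i : ℤ)) (op u (m + (i : ℤ)) w))
  proj_linear : ∀ n : ℤ, IsLinearMap ℂ (proj n)
  proj_mem : ∀ (n : ℤ) (v : carrier), proj n v ∈ wtSpace n
  proj_eq : ∀ n : ℤ, ∀ v ∈ wtSpace n, proj n v = v
  proj_ne : ∀ m n : ℤ, m ≠ n → ∀ v ∈ wtSpace m, proj n v = 0
  proj_finite : ∀ v : carrier, (Function.support fun n => proj n v).Finite
  proj_sum : ∀ v : carrier, (∑ᶠ n : ℤ, proj n v) = v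
  fd : ∀ n : ℤ, FiniteDimensional ℂ (wtSpace n)
  lower_trunc : ∃ N : ℤ, ∀ n : ℤ, n < N → wtSpace n = ⊥
  one_wt : one ∈ wtSpace 0
  omega_wt : omega ∈ wtSpace 2
  op_wt : ∀ k m n : ℤ, ∀ u ∈ wtSpace k, ∀ v ∈ wtSpace m, op u n v ∈ wtSpace (k + m - n - 1)
  L_zero : ∀ n : ℤ, ∀ v ∈ wtSpace n, op omega 1 v = (n : ℂ) • v
  L_neg_one : ∀ (u : carrier) (n : ℤ) (w : carrier),
    op (op omega 0 u) n w = (-(n : ℂ)) • op u (n - 1) w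
  virasoro : ∀ (m n : ℤ) (v : carrier),
    op omega (m + 1) (op omega (n + 1) v) - op omega (n + 1) (op omega (m + 1) v)
      = ((m : ℂ) - (n : ℂ)) • op omega (m + n + 1) v
        + (if m + n = 0 then (((m : ℂ) ^ 3 - (m : ℂ)) / 12) * cc else 0) • v

attribute [instance] VOA.grp VOA.mdl

namespace VOA

variable (V : VOA)

/-- The Virasoro operator `L(k) = ω_{k+1}`. -/
def L (k : ℤ) (v : V.carrier) : V.carrier := V.op V.omega (k + 1) v

/-- The positive-weight part `V₊ = ⊕_{n ≥ 1} V₍ₙ₎`. -/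
def pos : Submodule ℂ V.carrier := ⨆ (n : ℤ) (_ : 1 ≤ n), V.wtSpace n

/-- Zhu's subspace `C₂(V) = span{u₋₂v : u, v ∈ V}`. -/
def C2 : Submodule ℂ V.carrier :=
  Submodule.span ℂ {x : V.carrier | ∃ u v : V.carrier, x = V.op u (-2) v}

/-- The subspace `C₁(V) = span(v₋₁V₊ (v ∈ V₊) together with L(-1)V)`. -/
def C1 : Submodule ℂ V.carrier :=
  Submodule.span ℂ
    ({x : V.carrier | ∃ u ∈ V.pos, ∃ v ∈ V.pos, x = V.op u (-1) v}
      ∪ {x : V.carrier | ∃ v : V.carrier, x = V.op V.omega 0 v})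

/-- Iterated application of modes: `iterApply [(u¹,n₁),…,(uʳ,n_r)] w = u¹_{n₁} ⋯ uʳ_{n_r} w`. -/
def iterApply : List (V.carrier × ℤ) → V.carrier → V.carrier
  | [], w => w
  | p :: l, w => V.op p.1 p.2 (iterApply l w)

/-- `U ⊆ V` generates `V` as a vertex operator algebra:  `V` is linearly spanned by
the elements `u¹_{n₁} ⋯ uʳ_{n_r} 1` with `uⁱ ∈ U`, `n_i ∈ ℤ`. -/
def generates (U : Set V.carrier) : Prop :=
  Submodule.span ℂ {x : V.carrier | ∃ l : List (V.carrier × ℤ),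
    (∀ p ∈ l, p.1 ∈ U) ∧ x = V.iterApply l V.one} = ⊤

/-- `V` is finitely generated as a vertex operator algebra. -/
def FinitelyGenerated : Prop := ∃ S : Finset V.carrier, V.generates ↑S

end VOA

/-- A weak `V`-module: all axioms of a module (truncation, vacuum, Jacobi identity in
Borcherds form) except those involving gradings. -/
structure WeakModule (V : VOA) where
  carrier : Type
  [grp : AddCommGroup carrier]
  [mdl : Module ℂ carrier]
  op : V.carrier → ℤ → carrier → carrier
  op_linear_left : ∀ (n : ℤ) (w : carrier), IsLinearMap ℂ fun u => op u n w
  op_linear_right : ∀ (u : V.carrier) (n : ℤ), IsLinearMap ℂ (op u n)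
  trunc : ∀ (u : V.carrier) (w : carrier), ∃ N : ℤ, ∀ n : ℤ, N ≤ n → op u n w = 0
  one_op : ∀ (n : ℤ) (w : carrier), op V.one n w = if n = -1 then w else 0
  borcherds : ∀ (u v : V.carrier) (w : carrier) (l m n : ℤ),
    (∑ᶠ i : ℕ, cchoose m i • op (V.op u (l + (i : ℤ)) v) (m + n - (i : ℤ)) w)
      = ∑ᶠ i : ℕ, ((-1 : ℂ) ^ i * cchoose l i) •
          (op u (l + m - (i : ℤ)) (op v (n + (i : ℤ)) w)
            - ((-1 : ℂ) ^ l) • op v (l + n - (i : ℤ)) (op u (m + (i : ℤ)) w))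

attribute [instance] WeakModule.grp WeakModule.mdl

namespace WeakModule

variable {V : VOA} (W : WeakModule V)

/-- `L(0)` acting on a weak module, as a linear map. -/
def L0 : W.carrier →ₗ[ℂ] W.carrier := IsLinearMap.mk' _ (W.op_linear_right V.omega 1)

/-- The `L(0)`-eigenspace of eigenvalue `h`. -/
def eig (h : ℂ) : Submodule ℂ W.carrier :=
  LinearMap.ker (W.L0 - h • (LinearMap.id : W.carrier →ₗ[ℂ] W.carrier))

/-- The coefficient `v*ₙ` of the adjoint vertex operator
`⟨Y*(v,x)α, w⟩ = ⟨α, Y(e^{xL(1)}(-x^{-2})^{L(0)}v, x^{-1})w⟩` acting on the full dual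
space: for `v` homogeneous of weight `h`,
`(v*ₙ α)(w) = (-1)^h Σ_{i≥0} (1/i!) α((L(1)^i v)_{2h-n-i-2} w)`, extended to general
`v` via the weight-space projections. -/
def dmode (v : V.carrier) (n : ℤ) (α : W.carrier → ℂ) (w : W.carrier) : ℂ :=
  ∑ᶠ h : ℤ, ∑ᶠ i : ℕ,
    ((-1 : ℂ) ^ h / (Nat.factorial i : ℂ)) *
      α (W.op ((V.L 1)^[i] (V.proj h v)) (2 * h - n - (i : ℤ) - 2) w)

/-- `D(W) ⊆ W*`: the linear functionals `α` on `W` such that for every `v ∈ V`,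
`Y*(v,x)α ∈ W*((x))`, i.e. `v*ₙ α = 0` for `n` sufficiently large. -/
def DW : Set (W.carrier → ℂ) :=
  {α | IsLinearMap ℂ α ∧
    ∀ v : V.carrier, ∃ N : ℤ, ∀ n : ℤ, N ≤ n → ∀ w : W.carrier, W.dmode v n α w = 0}

/-- A subspace stable under all modes of all vertex operators, i.e. a `V`-submodule. -/
def IsStable (S : Submodule ℂ W.carrier) : Prop :=
  ∀ (v : V.carrier) (n : ℤ), ∀ m ∈ S, W.op v n m ∈ S

/-- An irreducible (nonzero, no proper nonzero stable subspaces) `V`-submodule. -/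
def IsIrreducibleSub (S : Submodule ℂ W.carrier) : Prop :=
  S ≠ ⊥ ∧ W.IsStable S ∧
    ∀ T : Submodule ℂ W.carrier, W.IsStable T → T ≤ S → T = ⊥ ∨ T = S

/-- A stable subspace which is an ordinary module: `L(0)` acts semisimply on it with
finite-dimensional eigenspaces, and for each `h` the eigenvalues `h + m` do not occur
for `m` a sufficiently negative integer. -/
def IsOrdinarySub (S : Submodule ℂ W.carrier) : Prop :=
  S ≤ (⨆ h : ℂ, W.eig h ⊓ S) ∧ (∀ h : ℂ, FiniteDimensional ℂ ↥(W.eig h ⊓ S)) ∧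
    ∀ h : ℂ, ∃ N : ℤ, ∀ m : ℤ, m ≤ N → W.eig (h + (m : ℂ)) ⊓ S = ⊥

/-- The weak module `W` is irreducible. -/
def IsIrreducible : Prop :=
  (⊥ : Submodule ℂ W.carrier) ≠ ⊤ ∧
    ∀ S : Submodule ℂ W.carrier, W.IsStable S → S = ⊥ ∨ S = ⊤

/-- `Cₙ(W) = span{v₋ₙw : v ∈ V, w ∈ W}`. -/
def Cn (n : ℤ) : Submodule ℂ W.carrier :=
  Submodule.span ℂ {x : W.carrier | ∃ (v : V.carrier) (w : W.carrier), x = W.op v (-n) w}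

/-- `B(W) = span(u₋₁W (u ∈ V₊) together with v₀W (v homogeneous, wt v ≥ 2))`. -/
def BW : Submodule ℂ W.carrier :=
  Submodule.span ℂ
    ({x : W.carrier | ∃ v ∈ V.pos, ∃ w : W.carrier, x = W.op v (-1) w}
      ∪ {x : W.carrier | ∃ k : ℤ, 2 ≤ k ∧ ∃ v ∈ V.wtSpace k, ∃ w : W.carrier, x = W.op v 0 w})

/-- Zhu's subspace `O(W) = span{Σ_{i≥0} C(wt v, i) v_{i-2} w}` so that `A(W) = W/O(W)`. -/
def OW : Submodule ℂ W.carrier :=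
  Submodule.span ℂ
    {x : W.carrier | ∃ (k : ℤ) (v : V.carrier), v ∈ V.wtSpace k ∧
      ∃ w : W.carrier, x = ∑ᶠ i : ℕ, cchoose k i • W.op v ((i : ℤ) - 2) w}

/-- A subspace `T ⊇ O(W)` of `W` is closed under the Frenkel–Zhu left and right
`A(V)`-actions `v * w = Σᵢ C(wt v, i) v_{i-1} w` and `w * v = Σᵢ C(wt v - 1, i) v_{i-1} w`;
for `T ⊇ O(W)` this expresses that `T/O(W)` is an `A(V)`-sub-bimodule of `A(W)`. -/
def BimoduleClosed (T : Submodule ℂ W.carrier) : Prop :=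
  ∀ k : ℤ, ∀ v ∈ V.wtSpace k, ∀ w ∈ T,
    (∑ᶠ i : ℕ, cchoose k i • W.op v ((i : ℤ) - 1) w) ∈ T ∧
    (∑ᶠ i : ℕ, cchoose (k - 1) i • W.op v ((i : ℤ) - 1) w) ∈ T

/-- Equivalence (isomorphism) of weak modules. -/
def Equiv (M N : WeakModule V) : Prop :=
  ∃ e : M.carrier ≃ₗ[ℂ] N.carrier,
    ∀ (v : V.carrier) (n : ℤ) (w : M.carrier), e (M.op v n w) = N.op v n (e w)

end WeakModule

/-- `V` is of class 𝒜: `L(0)` acts semisimply on every weak `V`-module. -/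
def VOA.classA (V : VOA) : Prop :=
  ∀ M : WeakModule V, (⨆ h : ℂ, M.eig h) = ⊤

/-- `V` is regular: every weak `V`-module is a direct sum of irreducible ordinary
`V`-modules. -/
def VOA.regular (V : VOA) : Prop :=
  ∀ M : WeakModule V, ∃ (ι : Type) (S : ι → Submodule ℂ M.carrier),
    (∀ i, M.IsIrreducibleSub (S i) ∧ M.IsOrdinarySub (S i)) ∧
    (∀ i, Disjoint (S i) (⨆ (j : ι) (_ : j ≠ i), S j)) ∧ (⨆ i, S i) = ⊤

/-- A generalized `V`-module: a weak module with a semisimple `L(0)`-action, graded by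
the `L(0)`-eigenvalues, with weight-space projections `projW`. -/
structure GenModule (V : VOA) extends WeakModule V where
  wt : ℂ → Submodule ℂ carrier
  projW : ℂ → carrier → carrier
  projW_linear : ∀ h : ℂ, IsLinearMap ℂ (projW h)
  projW_mem : ∀ (h : ℂ) (w : carrier), projW h w ∈ wt h
  projW_eq : ∀ h : ℂ, ∀ w ∈ wt h, projW h w = w
  projW_ne : ∀ g h : ℂ, g ≠ h → ∀ w ∈ wt g, projW h w = 0
  projW_finite : ∀ w : carrier, (Function.support fun h => projW h w).Finite
  projW_sum : ∀ w : carrier, (∑ᶠ h : ℂ, projW h w) = w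
  wt_L0 : ∀ h : ℂ, ∀ w ∈ wt h, op V.omega 1 w = h • w
  wt_op : ∀ k : ℤ, ∀ v ∈ V.wtSpace k, ∀ (h : ℂ) (n : ℤ), ∀ w ∈ wt h,
    op v n w ∈ wt (h + (k : ℂ) - (n : ℂ) - 1)

/-- An ordinary `V`-module: a generalized module whose weight spaces are
finite-dimensional and whose weights are truncated from below in each coset `h + ℤ`. -/
structure OrdModule (V : VOA) extends GenModule V where
  wt_fd : ∀ h : ℂ, FiniteDimensional ℂ ↥(wt h)
  wt_lower : ∀ h : ℂ, ∃ N : ℤ, ∀ m : ℤ, m ≤ N → wt (h + (m : ℂ)) = ⊥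

namespace GenModule

variable {V : VOA} (W : GenModule V)

/-- `W₊ = ⊕_{Re h > 0} W₍ₕ₎`. -/
def posW : Submodule ℂ W.carrier := ⨆ (h : ℂ) (_ : 0 < h.re), W.wt h

/-- `C₁(W) = span(v₋₁W₊ (v ∈ V₊) together with L(-1)W)`. -/
def C1W : Submodule ℂ W.carrier :=
  Submodule.span ℂ
    ({x : W.carrier | ∃ v ∈ V.pos, ∃ w ∈ W.posW, x = W.op v (-1) w}
      ∪ {x : W.carrier | ∃ w : W.carrier, x = W.op V.omega 0 w})

/-- The restricted dual `W' = ⊕ₕ W₍ₕ₎* ⊆ W*`: the linear functionals vanishing on all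
but finitely many weight spaces. -/
def restrictedDual : Set (W.carrier → ℂ) :=
  {α | IsLinearMap ℂ α ∧ {h : ℂ | ∃ w ∈ W.wt h, α w ≠ 0}.Finite}

end GenModule

/-- `D(W)⁰`: the sum of the `L(0)`-eigenspaces of the weak module `D(W) ⊆ W*`, where
`L*(0) = ω*₁` acts on `α ∈ W*` by `(L*(0)α)(w) = α(L(0)w)`. -/
def OrdModule.DW0 {V : VOA} (W : OrdModule V) : Set (W.carrier → ℂ) :=
  {α | ∃ (S : Finset ℂ) (f : ℂ → (W.carrier → ℂ)),
    (∀ h ∈ S, f h ∈ W.toWeakModule.DW ∧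
      ∀ w : W.carrier, f h (W.op V.omega 1 w) = h * f h w) ∧
    α = ∑ h ∈ S, f h}

/-- An ℕ-gradable weak `V`-module: a weak module with an ℕ-grading
`W = ⊕_{n∈ℕ} W(n)` with `v_m W(n) ⊆ W(wt v + n - m - 1)` (graded pieces of negative
index are zero). -/
structure NGradedModule (V : VOA) extends WeakModule V where
  gr : ℤ → Submodule ℂ carrier
  gr_neg : ∀ n : ℤ, n < 0 → gr n = ⊥
  gr_sup : (⨆ n : ℤ, gr n) = ⊤
  gr_indep : ∀ n : ℤ, Disjoint (gr n) (⨆ (m : ℤ) (_ : m ≠ n), gr m)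
  gr_op : ∀ k : ℤ, ∀ v ∈ V.wtSpace k, ∀ m n : ℤ, ∀ w ∈ gr n,
    op v m w ∈ gr (k + n - m - 1)

/-- An intertwining operator of type `(W₃; W₁ W₂)` in the sense of
Frenkel–Huang–Lepowsky, recorded through its complex-indexed modes
`I w₁ h w₂ = (w₁)ₕ w₂` (so `Y(w₁,x)w₂ = Σ_{h∈ℂ} (w₁)ₕ w₂ x^{-h-1}`):
linearity, truncation, the `L(-1)`-derivative property, and the Jacobi identity in
component (Borcherds) form. -/
def IsIntertwiner {V : VOA} (W1 W2 W3 : OrdModule V)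
    (I : W1.carrier → ℂ → W2.carrier → W3.carrier) : Prop :=
  (∀ (h : ℂ) (w2 : W2.carrier), IsLinearMap ℂ fun w1 => I w1 h w2) ∧
  (∀ (w1 : W1.carrier) (h : ℂ), IsLinearMap ℂ (I w1 h)) ∧
  (∀ (w1 : W1.carrier) (w2 : W2.carrier) (h : ℂ),
    ∃ N : ℤ, ∀ n : ℤ, N ≤ n → I w1 (h + (n : ℂ)) w2 = 0) ∧
  (∀ (w1 : W1.carrier) (h : ℂ) (w2 : W2.carrier),
    I (W1.op V.omega 0 w1) h w2 = (-h) • I w1 (h - 1) w2) ∧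
  (∀ (u : V.carrier) (w1 : W1.carrier) (w2 : W2.carrier) (l m : ℤ) (h : ℂ),
    (∑ᶠ i : ℕ, cchoose m i • I (W1.op u (l + (i : ℤ)) w1) ((m : ℂ) + h - (i : ℂ)) w2)
      = ∑ᶠ i : ℕ, ((-1 : ℂ) ^ i * cchoose l i) •
          (W3.op u (l + m - (i : ℤ)) (I w1 (h + (i : ℂ)) w2)
            - ((-1 : ℂ) ^ l) • I w1 ((l : ℂ) + h - (i : ℂ)) (W2.op u (m + (i : ℤ)) w2)))

/-- The fusion rule `dim I(W₃; W₁W₂)` is finite: the space of intertwining operators of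
the indicated type is finite-dimensional. -/
def FusionFinite {V : VOA} (W1 W2 W3 : OrdModule V) : Prop :=
  FiniteDimensional ℂ
    ↥(Submodule.span ℂ {I : W1.carrier → ℂ → W2.carrier → W3.carrier |
        IsIntertwiner W1 W2 W3 I})

end

/-! The mode `v*ₙ α` is a finite sum of terms `± α ∘ u_{c-n}`, `u = L(1)ⁱ v / i!`, so `α ∈ D(W)` as
soon as `α` kills `u_m W` for every `u ∈ V` and `m ≪ 0`. The converse holds by induction, because
`L(1)` is nilpotent on a homogeneous `v`: once all `L(1)ⁱ v` with `i ≥ 1` are dealt with, only the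
term `± α ∘ v_{2h-n-2}` is left. The bound on `m` still depends on `α`; it becomes independent
of `α` by testing against a single `α` that vanishes on `U` but on none of countably many vectors
`v_m w ∉ U`. To find it, embed the countable-dimensional span of these vectors in `W/U` into
`ℂ[X]`, and evaluate at a point of the uncountable field `ℂ` avoiding all their roots. -/

section CountableSeparation

open Polynomial

theorem exists_injective_linearMap_polynomial {R M : Type*} [Semiring R] [AddCommMonoid M]
    [Module R M] [Module.Free R M] (hM : Module.rank R M ≤ Cardinal.aleph0) :
    ∃ Φ : M →ₗ[R] R[X], Function.Injective Φ :=
  Module.Free.exists_linearMap_injective_of_linearIndependent_of_lift_rank_le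
    (basisMonomials R).linearIndependent (by simpa using hM)

theorem exists_forall_eval_ne_zero_of_countable {R : Type*} [CommRing R] [IsDomain R]
    [Uncountable R] {s : Set R[X]} (hs : s.Countable) (h0 : 0 ∉ s) :
    ∃ t : R, ∀ p ∈ s, p.eval t ≠ 0 := by
  have hroots : (⋃ p ∈ s, {t | p.IsRoot t}).Countable :=
    hs.biUnion fun p hp => (finite_setOfPred_isRoot (ne_of_mem_of_not_mem hp h0)).countable
  obtain ⟨t, ht⟩ := (Set.ne_univ_iff_exists_notMem _).1 fun huniv =>
    Set.not_countable_univ (huniv.subst hroots)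
  exact ⟨t, fun p hp hpt => ht (Set.mem_biUnion hp hpt)⟩

variable {K M : Type*} [Field K] [AddCommGroup M] [Module K M]

theorem exists_dual_forall_eq_zero_of_countable [Uncountable K] {s : Set M} (hs : s.Countable) :
    ∃ f : Module.Dual K M, ∀ x ∈ s, f x = 0 → x = 0 := by
  let P := Submodule.span K s
  have hrank : Module.rank K P ≤ Cardinal.aleph0 :=
    (rank_span_le s).trans (Cardinal.le_aleph0_iff_set_countable.2 hs)
  obtain ⟨Φ, hΦ⟩ := exists_injective_linearMap_polynomial hrank
  have himage : (Φ '' ((↑) ⁻¹' s) \ {0}).Countable :=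
    ((hs.preimage Subtype.val_injective).image Φ).mono Set.sdiff_subset
  obtain ⟨t, ht⟩ := exists_forall_eval_ne_zero_of_countable himage (by simp)
  obtain ⟨f, hf⟩ := (leval t ∘ₗ Φ).exists_extend
  refine ⟨f, fun x hx hfx => ?_⟩
  let y : P := ⟨x, Submodule.subset_span hx⟩
  have heval : (Φ y).eval t = 0 := (LinearMap.congr_fun hf y).symm.trans hfx
  have hΦy : Φ y = 0 := by_contra fun hne => ht _ ⟨Set.mem_image_of_mem Φ hx, hne⟩ heval
  exact congrArg Subtype.val ((map_eq_zero_iff Φ hΦ).1 hΦy)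

theorem exists_dual_le_ker_forall_mem_of_countable [Uncountable K] (U : Submodule K M)
    {s : Set M} (hs : s.Countable) :
    ∃ f : Module.Dual K M, U ≤ LinearMap.ker f ∧ ∀ x ∈ s, f x = 0 → x ∈ U := by
  obtain ⟨g, hg⟩ := exists_dual_forall_eq_zero_of_countable (K := K) (hs.image U.mkQ)
  refine ⟨g ∘ₗ U.mkQ, U.ker_mkQ.symm.le.trans (LinearMap.ker_le_ker_comp _ _), fun x hx hgx => ?_⟩
  exact (Submodule.Quotient.mk_eq_zero U).1 (hg _ (Set.mem_image_of_mem _ hx) hgx)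

theorem eventually_le_of_forall_dual [Uncountable K] {ι : Type*} [Countable ι] {l : Filter ι}
    {R : ι → Submodule K M} {U : Submodule K M}
    (h : ∀ f : Module.Dual K M, U ≤ LinearMap.ker f → ∀ᶠ i in l, R i ≤ LinearMap.ker f) :
    ∀ᶠ i in l, R i ≤ U := by
  have hwitness : ∀ i, ∃ x ∈ R i, x ∈ U → R i ≤ U := fun i => by
    by_cases hi : R i ≤ U
    · exact ⟨0, zero_mem _, fun _ => hi⟩
    · obtain ⟨x, hx, hxU⟩ := SetLike.not_le_iff_exists.1 hi
      exact ⟨x, hx, fun hmem => absurd hmem hxU⟩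
  choose x hxR hxU using hwitness
  obtain ⟨f, hUf, hf⟩ :=
    exists_dual_le_ker_forall_mem_of_countable U (Set.countable_range x)
  exact (h f hUf).mono fun i hi => hxU i (hf _ (Set.mem_range_self i) (hi (hxR i)))

end CountableSeparation

namespace VOA

variable {V : VOA}

theorem iSup_wtSpace_eq_top : ⨆ h, V.wtSpace h = ⊤ := by
  refine eq_top_iff.2 fun v _ => ?_
  rw [← V.proj_sum v]
  exact finsum_induction (· ∈ ⨆ h, V.wtSpace h) (zero_mem _) (fun _ _ => add_mem)
    fun h => Submodule.mem_iSup_of_mem h (V.proj_mem h v)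

theorem L_one_iterate_zero (i : ℕ) : (V.L 1)^[i] 0 = 0 :=
  Function.iterate_fixed (V.op_linear_right V.omega (1 + 1)).map_zero i

theorem L_one_mem_wtSpace {h : ℤ} {v : V.carrier} (hv : v ∈ V.wtSpace h) :
    V.L 1 v ∈ V.wtSpace (h - 1) := by
  have hweight : 2 + h - (1 + 1) - 1 = h - 1 := by ring
  exact hweight ▸ V.op_wt 2 h (1 + 1) V.omega V.omega_wt v hv

theorem L_one_iterate_mem_wtSpace {h : ℤ} {v : V.carrier} (hv : v ∈ V.wtSpace h) (i : ℕ) :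
    (V.L 1)^[i] v ∈ V.wtSpace (h - i) := by
  induction i with
  | zero => simpa using hv
  | succ i ih =>
    rw [Function.iterate_succ_apply', Nat.cast_succ, ← sub_sub]
    exact L_one_mem_wtSpace ih

theorem finite_support_L_one_iterate {h : ℤ} {v : V.carrier} (hv : v ∈ V.wtSpace h) :
    (Function.support fun i => (V.L 1)^[i] v).Finite := by
  obtain ⟨N, hN⟩ := V.lower_trunc
  refine (Set.finite_Iic (h - N).toNat).subset fun i hi => ?_
  by_contra hlarge
  have hmem := L_one_iterate_mem_wtSpace hv i
  rw [hN (h - i) (by rw [Set.mem_Iic] at hlarge; omega)] at hmem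
  exact hi ((Submodule.mem_bot ℂ).1 hmem)

end VOA

namespace WeakModule

open Filter LinearMap VOA

variable {V : VOA} {W : WeakModule V}

theorem zero_op (m : ℤ) (w : W.carrier) : W.op 0 m w = 0 :=
  (W.op_linear_left m w).map_zero

/-- The mode `v_m` as an endomorphism of `W`. -/
def mode (W : WeakModule V) (v : V.carrier) (m : ℤ) : Module.End ℂ W.carrier :=
  (W.op_linear_right v m).mk' _

/-- The vectors `v ∈ V` with `v_m W ⊆ U` for all sufficiently negative `m`, as a subspace of `V`. -/
def lowModesInto (U : Submodule ℂ W.carrier) : Submodule ℂ V.carrier where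
  carrier := {v | ∀ᶠ m in atBot, ∀ w, W.op v m w ∈ U}
  zero_mem' := Eventually.of_forall fun m w => by simp only [zero_op, zero_mem]
  add_mem' hu hv := (hu.and hv).mono fun m h w => by
    rw [(W.op_linear_left m w).map_add]
    exact add_mem (h.1 w) (h.2 w)
  smul_mem' c v hv := hv.mono fun m h w => by
    rw [(W.op_linear_left m w).map_smul]
    exact U.smul_mem c (h w)

theorem mem_lowModesInto {U : Submodule ℂ W.carrier} {v : V.carrier} :
    v ∈ lowModesInto U ↔ ∀ᶠ m in atBot, ∀ w, W.op v m w ∈ U :=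
  Iff.rfl

theorem lowModesInto_mono {U U' : Submodule ℂ W.carrier} (h : U ≤ U') :
    lowModesInto U ≤ lowModesInto U' :=
  fun _ hv => hv.mono fun _ hm w => h (hm w)

theorem mem_lowModesInto_iff_forall_dual {U : Submodule ℂ W.carrier} {v : V.carrier} :
    v ∈ lowModesInto U ↔
      ∀ α : Module.Dual ℂ W.carrier, U ≤ ker α → v ∈ lowModesInto (ker α) := by
  refine ⟨fun hv α hα => lowModesInto_mono hα hv, fun h => ?_⟩
  have : Uncountable ℂ := Set.not_countable_univ_iff.1 not_countable_complex
  have hrange : ∀ᶠ m in atBot, range (W.mode v m) ≤ U :=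
    eventually_le_of_forall_dual fun α hα => (h α hα).mono fun m hm => by
      rintro _ ⟨w, rfl⟩
      exact hm w
  exact hrange.mono fun m hm w => hm ⟨w, rfl⟩

section Dual

variable {α : Module.Dual ℂ W.carrier} {h : ℤ} {v : V.carrier}

theorem dmode_of_mem_wtSpace (hv : v ∈ V.wtSpace h) (n : ℤ) (w : W.carrier) :
    W.dmode v n α w = ∑ᶠ i : ℕ, ((-1 : ℂ) ^ h / (Nat.factorial i : ℂ)) *
      α (W.op ((V.L 1)^[i] v) (2 * h - n - i - 2) w) := by
  unfold dmode
  rw [finsum_eq_single _ h fun g hg => ?_, V.proj_eq h v hv]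
  simp only [V.proj_ne h g hg.symm v hv, L_one_iterate_zero, zero_op, map_zero, mul_zero,
    finsum_zero]

theorem dmode_eq_finsum_dmode_proj (v : V.carrier) (n : ℤ) (w : W.carrier) :
    W.dmode v n α w = ∑ᶠ h : ℤ, W.dmode (V.proj h v) n α w :=
  finsum_congr fun h => (dmode_of_mem_wtSpace (V.proj_mem h v) n w).symm

theorem zero_dmode (n : ℤ) (w : W.carrier) : W.dmode 0 n α w = 0 := by
  simp only [dmode_of_mem_wtSpace (zero_mem (V.wtSpace 0)), L_one_iterate_zero, zero_op, map_zero,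
    mul_zero, finsum_zero]

theorem eventually_apply_op_eq_zero (hv : v ∈ lowModesInto (ker α)) (c : ℤ) :
    ∀ᶠ n in atTop, ∀ w, α (W.op v (c - n) w) = 0 := by
  have hc : Tendsto (fun n : ℤ => c - n) atTop atBot := by
    simpa only [sub_eq_add_neg] using tendsto_atBot_add_const_left _ c tendsto_neg_atTop_atBot
  exact hc.eventually hv

theorem eventually_dmode_eq_leading_term (hv : v ∈ V.wtSpace h)
    (hL : ∀ i, (V.L 1)^[i + 1] v ∈ lowModesInto (ker α)) :
    ∀ᶠ n in atTop, ∀ w, W.dmode v n α w = (-1 : ℂ) ^ h * α (W.op v (2 * h - 2 - n) w) := by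
  have hlower : ∀ᶠ n in atTop, ∀ i ∈ Function.support fun i => (V.L 1)^[i] v, i ≠ 0 →
      ∀ w, α (W.op ((V.L 1)^[i] v) (2 * h - i - 2 - n) w) = 0 :=
    (eventually_all_finite (finite_support_L_one_iterate hv)).2 fun i _ => by
      rcases i with _ | i
      · exact Eventually.of_forall fun _ hi => absurd rfl hi
      · exact (eventually_apply_op_eq_zero (hL i) _).mono fun _ hn _ => hn
  refine hlower.mono fun n hn w => ?_
  rw [dmode_of_mem_wtSpace hv, finsum_eq_single _ 0 fun i hi => ?_]
  · simp [sub_right_comm]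
  · by_cases hzero : (V.L 1)^[i] v = 0
    · rw [hzero, zero_op, map_zero, mul_zero]
    · rw [show 2 * h - n - i - 2 = 2 * h - i - 2 - n by ring, hn i hzero hi w, mul_zero]

theorem eventually_dmode_eq_zero_of_mem_wtSpace (hα : lowModesInto (ker α) = ⊤)
    (hv : v ∈ V.wtSpace h) : ∀ᶠ n in atTop, ∀ w, W.dmode v n α w = 0 := by
  have hmem (u : V.carrier) : u ∈ lowModesInto (ker α) := hα ▸ Submodule.mem_top
  filter_upwards [eventually_dmode_eq_leading_term hv fun _ => hmem _,
    eventually_apply_op_eq_zero (hmem v) (2 * h - 2)] with n hlead hzero w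
  rw [hlead, hzero, mul_zero]

theorem eventually_dmode_eq_zero (hα : lowModesInto (ker α) = ⊤) (v : V.carrier) :
    ∀ᶠ n in atTop, ∀ w, W.dmode v n α w = 0 := by
  have hproj : ∀ᶠ n in atTop, ∀ h ∈ Function.support fun h => V.proj h v,
      ∀ w, W.dmode (V.proj h v) n α w = 0 :=
    (eventually_all_finite (V.proj_finite v)).2 fun h _ =>
      eventually_dmode_eq_zero_of_mem_wtSpace hα (V.proj_mem h v)
  refine hproj.mono fun n hn w => ?_
  rw [dmode_eq_finsum_dmode_proj]
  refine finsum_eq_zero_of_forall_eq_zero fun h => ?_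
  by_cases hzero : V.proj h v = 0
  · rw [hzero, zero_dmode]
  · exact hn h hzero w

theorem mem_lowModesInto_of_L_one_iterate_mem (hα : ⇑α ∈ W.DW) (hv : v ∈ V.wtSpace h)
    (hL : ∀ i, (V.L 1)^[i + 1] v ∈ lowModesInto (ker α)) : v ∈ lowModesInto (ker α) := by
  have hlead : ∀ᶠ n in atTop, ∀ w, α (W.op v (2 * h - 2 - n) w) = 0 := by
    filter_upwards [eventually_dmode_eq_leading_term hv hL, eventually_atTop.2 (hα.2 v)]
      with n hn hzero w
    simpa [zpow_ne_zero] using (hn w).symm.trans (hzero w)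
  have hc : Tendsto (fun m : ℤ => 2 * h - 2 - m) atBot atTop := by
    simpa only [sub_eq_add_neg] using tendsto_atTop_add_const_left _ _ tendsto_neg_atBot_atTop
  refine (hc.eventually hlead).mono fun m hm w => ?_
  simpa using hm w

theorem mem_lowModesInto_of_mem_wtSpace (hα : ⇑α ∈ W.DW) (hv : v ∈ V.wtSpace h) :
    v ∈ lowModesInto (ker α) := by
  obtain ⟨d, hd⟩ := (finite_support_L_one_iterate hv).exists_notMem
  replace hd : (V.L 1)^[d] v = 0 := Function.notMem_support.1 hd
  induction d generalizing v h with
  | zero =>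
    obtain rfl : v = 0 := hd
    exact zero_mem _
  | succ d ih =>
    refine mem_lowModesInto_of_L_one_iterate_mem hα hv fun i =>
      ih (L_one_iterate_mem_wtSpace hv (i + 1)) ?_
    rw [← Function.iterate_add_apply, show d + (i + 1) = i + (d + 1) by ring,
      Function.iterate_add_apply, hd, L_one_iterate_zero]

theorem coe_mem_DW_iff : ⇑α ∈ W.DW ↔ lowModesInto (ker α) = ⊤ := by
  constructor
  · intro hα
    rw [eq_top_iff, ← iSup_wtSpace_eq_top]
    exact iSup_le fun h v hv => mem_lowModesInto_of_mem_wtSpace hα hv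
  · exact fun hα => ⟨α.isLinear, fun v => eventually_atTop.1 (eventually_dmode_eq_zero hα v)⟩

end Dual

end WeakModule

/-- For a subspace `U` of a weak `V`-module `W`, viewing `(W/U)*` as
the subspace of `W*` of functionals vanishing on `U`, one has `(W/U)* ⊆ D(W)` iff for
every `v ∈ V` there exists `k ∈ ℤ` such that `vₘW ⊆ U` for all `m ≤ k`. -/
theorem quotient_dual_subset_DW_iff (V : VOA) (W : WeakModule V)
    (U : Submodule ℂ W.carrier) :
    (∀ α : W.carrier → ℂ, IsLinearMap ℂ α → (∀ u ∈ U, α u = 0) → α ∈ W.DW) ↔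
      ∀ v : V.carrier, ∃ k : ℤ, ∀ m : ℤ, m ≤ k → ∀ w : W.carrier, W.op v m w ∈ U := by
  simp_rw [← Filter.eventually_atBot, ← WeakModule.mem_lowModesInto]
  constructor
  · intro hdual v
    refine WeakModule.mem_lowModesInto_iff_forall_dual.2 fun α hα => ?_
    rw [WeakModule.coe_mem_DW_iff.1 (hdual α α.isLinear hα)]
    exact Submodule.mem_top
  · intro hmodes α hlin hα
    have hU : U ≤ LinearMap.ker (hlin.mk' α) := hα
    refine WeakModule.coe_mem_DW_iff (α := hlin.mk' α) |>.2 (eq_top_iff.2 fun v _ => ?_)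
    exact WeakModule.lowModesInto_mono hU (hmodes v)
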